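/- For any two simple objects V and J of C one has S'(V,J)·dim(J) = S'(J,V)·dim(V) in K (both sides compute the invariant of the Hopf link with components colored V and J). -/

import Mathlib

open CategoryTheory MonoidalCategory

namespace RibbonPaper

/-- A twist (balancing/ribbon structure) on a braided category with right duals:
a natural family of isomorphisms `θ V : V ⟶ V` satisfying
`θ (V ⊗ W) = c_{W,V} ∘ c_{V,W} ∘ (θ V ⊗ θ W)` and `θ (Vᘁ) = (θ V)ᘁ`. -/
structure Twist (C : Type*) [Category C] [MonoidalCategory C] [BraidedCategory C]
    [RightRigidCategory C] where
  θ : ∀ V : C, V ⟶ V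
  isIso : ∀ V : C, IsIso (θ V)
  natural : ∀ {V W : C} (f : V ⟶ W), f ≫ θ W = θ V ≫ f
  tensor : ∀ V W : C, θ (V ⊗ W) = (θ V ⊗ₘ θ W) ≫ (β_ V W).hom ≫ (β_ W V).hom
  dual : ∀ V : C, θ (Vᘁ) = (θ V)ᘁ

variable {C : Type*} [Category C] [MonoidalCategory C] [BraidedCategory C]
  [Preadditive C] [MonoidalPreadditive C] [RightRigidCategory C]

variable (T : Twist C)

/-- The modified evaluation `d'_V := d_V ∘ c_{V,V*} ∘ (θ_V ⊗ id_{V*})`. -/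
def dP (V : C) : V ⊗ Vᘁ ⟶ 𝟙_ C :=
  (T.θ V ⊗ₘ 𝟙 (Vᘁ)) ≫ (β_ V (Vᘁ)).hom ≫ ε_ V (Vᘁ)

/-- The modified coevaluation `b'_V := (id_{V*} ⊗ θ_V) ∘ c_{V,V*} ∘ b_V`. -/
def bP (V : C) : 𝟙_ C ⟶ Vᘁ ⊗ V :=
  η_ V (Vᘁ) ≫ (β_ V (Vᘁ)).hom ≫ (𝟙 (Vᘁ) ⊗ₘ T.θ V)

/-- The partial right trace `⟨f⟩_R`-endomorphism:
`(id_U ⊗ d'_V) ∘ (f ⊗ id_{V*}) ∘ (id_U ⊗ b_V) : U ⟶ U`. -/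
def ptrR {U V : C} (f : U ⊗ V ⟶ U ⊗ V) : U ⟶ U :=
  (ρ_ U).inv ≫ (U ◁ η_ V (Vᘁ)) ≫ (α_ U V (Vᘁ)).inv ≫ (f ▷ (Vᘁ)) ≫
    (α_ U V (Vᘁ)).hom ≫ (U ◁ dP T V) ≫ (ρ_ U).hom

/-- The partial left trace `⟨f⟩_L`-endomorphism:
`(d_U ⊗ id_V) ∘ (id_{U*} ⊗ f) ∘ (b'_U ⊗ id_V) : V ⟶ V`. -/
def ptrL {U V : C} (f : U ⊗ V ⟶ U ⊗ V) : V ⟶ V :=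
  (λ_ V).inv ≫ (bP T U ▷ V) ≫ (α_ (Uᘁ) U V).hom ≫ ((Uᘁ) ◁ f) ≫
    (α_ (Uᘁ) U V).inv ≫ (ε_ U (Uᘁ) ▷ V) ≫ (λ_ V).hom

/-- An object `V` is ambidextrous if `tr_L f = tr_R f` for all `f : V ⊗ V ⟶ V ⊗ V`. -/
def Ambidextrous (V : C) : Prop := ∀ f : V ⊗ V ⟶ V ⊗ V, ptrL T f = ptrR T f

/-- The categorical trace `tr_C(f) := d'_V ∘ (f ⊗ id_{V*}) ∘ b_V ∈ K = End(𝟙)`. -/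
def trC {V : C} (f : V ⟶ V) : 𝟙_ C ⟶ 𝟙_ C :=
  η_ V (Vᘁ) ≫ (f ▷ (Vᘁ)) ≫ dP T V

/-- The categorical (quantum) dimension `dim V := tr_C(id_V)`. -/
def qdim (V : C) : 𝟙_ C ⟶ 𝟙_ C := trC T (𝟙 V)

/-- The action of `K = End(𝟙)` on Hom-groups: `k • f := k ⊗ f` (up to unitors). -/
def smul {V W : C} (k : 𝟙_ C ⟶ 𝟙_ C) (f : V ⟶ W) : V ⟶ W :=
  (λ_ V).inv ≫ (k ⊗ₘ f) ≫ (λ_ W).hom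

/-- `V` is simple if `End(V) = K ⋅ id_V`. -/
def IsSimple (V : C) : Prop := ∀ f : V ⟶ V, ∃ k : 𝟙_ C ⟶ 𝟙_ C, f = smul k (𝟙 V)

/-- The endomorphism of `Y` computing `S'(X,Y)`:
`(id_Y ⊗ d'_X) ∘ ((c_{X,Y} ∘ c_{Y,X}) ⊗ id_{X*}) ∘ (id_Y ⊗ b_X)`. -/
def SMap (X Y : C) : Y ⟶ Y := ptrR T ((β_ Y X).hom ≫ (β_ X Y).hom)

/-- `V ∈ A(J)`: `V` is simple and `S'(J,V) ≠ 0`. -/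
def InA (J V : C) : Prop :=
  IsSimple V ∧ ∃ s : 𝟙_ C ⟶ 𝟙_ C, SMap T J V = smul s (𝟙 V) ∧ s ≠ 0

section Traces

universe v u

variable {C : Type u} [Category.{v} C] [MonoidalCategory C]

/-- The mate of `g` with respect to arbitrary exact pairings. -/
theorem exists_mate {X X' Y Y' : C} [ExactPairing X Y] [ExactPairing X' Y'] (g : X ⟶ X') :
    ∃ g' : Y' ⟶ Y, η_ X' Y' ≫ X' ◁ g' = η_ X Y ≫ g ▷ Y ∧
      g' ▷ X ≫ ε_ X Y = Y' ◁ g ≫ ε_ X' Y' :=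
  let : HasRightDual X := ⟨Y⟩
  let : HasRightDual X' := ⟨Y'⟩
  ⟨gᘁ, coevaluation_comp_rightAdjointMate g, rightAdjointMate_comp_evaluation g⟩

variable [BraidedCategory C]

/-- The double braiding of `U` and `V` followed by the braiding of `U ⊗ V` past `W`. -/
theorem double_braiding_comp_braiding (U V W : C) :
    ((β_ U V).hom ≫ (β_ V U).hom) ▷ W ≫ (β_ (U ⊗ V) W).hom =
      (α_ U V W).hom ≫ (β_ U (V ⊗ W)).hom ≫ (α_ V W U).hom ≫ (β_ V (W ⊗ U)).hom ≫
        (α_ W U V).hom := by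
  rw [comp_whiskerRight, Category.assoc, BraidedCategory.braiding_naturality_left]
  simp

/-- The trace of `f` computed with respect to an arbitrary exact pairing. -/
def pairingTrace [RightRigidCategory C] (T : Twist C) {X : C} (Y : C) [ExactPairing X Y]
    (f : X ⟶ X) : 𝟙_ C ⟶ 𝟙_ C :=
  η_ X Y ≫ (f ≫ T.θ X) ▷ Y ≫ (β_ X Y).hom ≫ ε_ X Y

theorem pairingTrace_comp_comm [RightRigidCategory C] (T : Twist C) {X X' : C} (Y Y' : C)
    [ExactPairing X Y] [ExactPairing X' Y'] (g : X ⟶ X') (h : X' ⟶ X) :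
    pairingTrace T Y (g ≫ h) = pairingTrace T Y' (h ≫ g) := by
  obtain ⟨g', h₁, h₂⟩ := exists_mate (Y := Y) (Y' := Y') g
  simp only [pairingTrace, comp_whiskerRight, Category.assoc]
  rw [← reassoc_of% h₁, whisker_exchange_assoc, whisker_exchange_assoc,
    BraidedCategory.braiding_naturality_right_assoc, h₂,
    ← BraidedCategory.braiding_naturality_left_assoc, ← comp_whiskerRight_assoc (T.θ X) g,
    ← T.natural, comp_whiskerRight_assoc]

theorem braiding_evaluation_tensor (U V U' V' : C) [ExactPairing U U'] [ExactPairing V V'] :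
    ((β_ U V).hom ≫ (β_ V U).hom) ▷ (V' ⊗ U') ≫ (β_ (U ⊗ V) (V' ⊗ U')).hom ≫
        ε_ (U ⊗ V) (V' ⊗ U') =
      (α_ U V (V' ⊗ U')).hom ≫ U ◁ (α_ V V' U').inv ≫
        U ◁ ((β_ V V').hom ≫ ε_ V V') ▷ U' ≫ U ◁ (λ_ U').hom ≫ (β_ U U').hom ≫ ε_ U U' := by
  have hε : (α_ (V' ⊗ U') U V).hom ≫ ε_ (U ⊗ V) (V' ⊗ U') =
      ((α_ V' U' U).hom ≫ V' ◁ ε_ U U' ≫ (ρ_ V').hom) ▷ V ≫ ε_ V V' := by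
    rw [ExactPairing.tensor_evaluation]
    monoidal
  have hδ (δ : V ⊗ V' ⟶ 𝟙_ C) :
      (α_ V (V' ⊗ U') U).hom ≫ V ◁ ((α_ V' U' U).hom ≫ V' ◁ ε_ U U' ≫ (ρ_ V').hom) ≫ δ =
        ((α_ V V' U').inv ≫ δ ▷ U' ≫ (λ_ U').hom) ▷ U ≫ ε_ U U' :=
    calc
      _ = 𝟙 _ ⊗≫ ((V ⊗ V') ◁ ε_ U U' ≫ δ ▷ 𝟙_ C) ⊗≫ 𝟙 _ := by monoidal
      _ = _ := by rw [whisker_exchange]; monoidal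
  rw [← Category.assoc, double_braiding_comp_braiding]
  simp only [Category.assoc]
  rw [hε, ← BraidedCategory.braiding_naturality_right_assoc, hδ,
    ← BraidedCategory.braiding_naturality_right_assoc]
  simp only [whiskerLeft_comp, Category.assoc]

variable [RightRigidCategory C] (T : Twist C)

/-- The trace of a partial trace is the trace over the tensor product. -/
theorem trC_ptrR {U V : C} (f : U ⊗ V ⟶ U ⊗ V) :
    trC T (ptrR T f) = pairingTrace T (Vᘁ ⊗ Uᘁ) f := by
  simp only [pairingTrace, T.tensor, comp_whiskerRight, Category.assoc]
  rw [← comp_whiskerRight_assoc (β_ U V).hom, braiding_evaluation_tensor,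
    ExactPairing.tensor_coevaluation]
  simp only [trC, ptrR, dP]
  generalize (β_ U (Uᘁ)).hom ≫ ε_ U (Uᘁ) = γ
  generalize (β_ V (Vᘁ)).hom ≫ ε_ V (Vᘁ) = δ
  calc
    _ = η_ U (Uᘁ) ⊗≫ (U ◁ η_ V (Vᘁ)) ▷ Uᘁ ⊗≫ f ▷ (Vᘁ ⊗ Uᘁ) ⊗≫ U ◁ T.θ V ▷ (Vᘁ ⊗ Uᘁ) ⊗≫
          (U ◁ δ ≫ T.θ U ▷ 𝟙_ C) ▷ Uᘁ ⊗≫ γ := by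
      simp only [tensorHom_id]; monoidal
    _ = _ := by rw [whisker_exchange, tensorHom_def']; monoidal

theorem trC_smul_id {X : C} (k : 𝟙_ C ⟶ 𝟙_ C) : trC T (smul k (𝟙 X)) = k ≫ qdim T X := by
  have h : η_ X (Xᘁ) ≫ smul k (𝟙 X) ▷ Xᘁ = k ≫ η_ X (Xᘁ) :=
    calc
      _ = 𝟙 _ ⊗≫ (𝟙_ C ◁ η_ X (Xᘁ) ≫ k ▷ (X ⊗ Xᘁ)) ⊗≫ 𝟙 _ := by
        simp only [smul, tensorHom_id]; monoidal
      _ = _ := by rw [whisker_exchange]; monoidal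
  rw [qdim, trC, trC, reassoc_of% h, id_whiskerRight, Category.id_comp]

/-- The Hopf link invariant is symmetric in its two colours. -/
theorem trC_SMap_comm (X Y : C) : trC T (SMap T X Y) = trC T (SMap T Y X) := by
  rw [SMap, SMap, trC_ptrR, trC_ptrR, pairingTrace_comp_comm T _ (Yᘁ ⊗ Xᘁ)]

end Traces


/-- For simple objects `V` and `J`,
`S'(V,J)·dim(J) = S'(J,V)·dim(V)` in `K` (both sides compute the invariant of the
Hopf link with components colored `V` and `J`). -/
theorem statement7 (V J : C) (hV : IsSimple V) (hJ : IsSimple J)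
    (sVJ sJV : 𝟙_ C ⟶ 𝟙_ C)
    (hsVJ : SMap T V J = smul sVJ (𝟙 J))
    (hsJV : SMap T J V = smul sJV (𝟙 V)) :
    sVJ ≫ qdim T J = sJV ≫ qdim T V := by
  rw [← trC_smul_id, ← trC_smul_id, ← hsVJ, ← hsJV, trC_SMap_comm]

end RibbonPaper
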